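/- Let k be a positive integer and let p be a prime with p ≡ 5 (mod 6). Let r be a nonnegative integer such that p divides 6r+5. Then for all integers n ≥ 0, B̄_{2,9}( 6p^{k+1} n + 6pr + 5p ) ≡ (−p) · B̄_{2,9}( 6p^{k−1} n + (6r+5)/p ) (mod 8). -/

import Mathlib

/-- `biregOverpartitions l1 l2 n` is the number of `(l1, l2)`-biregular overpartitions of `n`:
overpartitions of `n` (partitions in which the first occurrence of each part size may be
overlined) none of whose parts is divisible by `l1` or by `l2`.  Each partition of `n` with
admissible parts contributes `2 ^ (number of distinct part sizes)` overpartitions,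
corresponding to the choice of which part sizes have their first occurrence overlined. -/
def biregOverpartitions (l1 l2 n : ℕ) : ℕ :=
  ∑ p : Nat.Partition n,
    if ∀ x ∈ p.parts, ¬ l1 ∣ x ∧ ¬ l2 ∣ x then 2 ^ p.parts.toFinset.card else 0

/-- The `(l1, l2)`-admissible divisors of `n`: those divisible by neither `l1` nor `l2`. -/
def biregDivisors (l1 l2 n : ℕ) : Finset ℕ :=
  n.divisors.filter fun a => ¬ l1 ∣ a ∧ ¬ l2 ∣ a

open PowerSeries in
/-- The power series `q ^ a + q ^ (2 * a) + q ^ (3 * a) + ⋯` if `a` is divisible by neither `l1`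
nor `l2`, and zero otherwise. -/
noncomputable def biregPartSeries (l1 l2 a : ℕ) : ℤ⟦X⟧ :=
  PowerSeries.mk fun n => if n ≠ 0 ∧ a ∣ n ∧ ¬ l1 ∣ a ∧ ¬ l2 ∣ a then 1 else 0

/-- Expansion of a product of factors `1 + 2 x` modulo `8`, in terms of power sums. -/
theorem exists_prod_one_add_two_mul {ι R : Type*} [CommRing R] (s : Finset ι) (x : ι → R) :
    ∃ E C : R, (∑ i ∈ s, x i) ^ 2 = ∑ i ∈ s, x i ^ 2 + 2 * E ∧
      ∏ i ∈ s, (1 + 2 * x i) = 1 + 2 * ∑ i ∈ s, x i + 4 * E + 8 * C := by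
  classical
  induction s using Finset.induction_on with
  | empty => exact ⟨0, 0, by simp, by simp⟩
  | insert a s ha ih =>
    obtain ⟨E, C, hE, hC⟩ := ih
    refine ⟨E + x a * ∑ i ∈ s, x i, C + E * x a + 2 * C * x a, ?_, ?_⟩
    · rw [Finset.sum_insert ha, Finset.sum_insert ha]
      linear_combination hE
    · rw [Finset.prod_insert ha, Finset.sum_insert ha, hC]
      ring

theorem sum_ite_eq_sum_biregDivisors (l1 l2 : ℕ) {n : ℕ} {s : Finset ℕ}
    (hs : Finset.range n ⊆ s) (g : ℕ → ℤ) :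
    ∑ i ∈ s, (if n ≠ 0 ∧ (i + 1) ∣ n ∧ ¬ l1 ∣ (i + 1) ∧ ¬ l2 ∣ (i + 1) then g (i + 1) else 0) =
      ∑ a ∈ biregDivisors l1 l2 n, g a := by
  rw [← Finset.sum_filter]
  refine Finset.sum_nbij' (· + 1) (· - 1) ?_ ?_ ?_ ?_ ?_
  · intro i hi
    simp only [Finset.mem_filter] at hi
    simp only [biregDivisors, Finset.mem_filter, Nat.mem_divisors]
    tauto
  · intro a ha
    simp only [biregDivisors, Finset.mem_filter, Nat.mem_divisors] at ha
    have hpos : 0 < a := Nat.pos_of_dvd_of_pos ha.1.1 (Nat.pos_of_ne_zero ha.1.2)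
    have hle : a ≤ n := Nat.le_of_dvd (Nat.pos_of_ne_zero ha.1.2) ha.1.1
    simp only [Finset.mem_filter, Nat.sub_add_cancel hpos]
    exact ⟨hs (Finset.mem_range.2 (by omega)), ha.1.2, ha.1.1, ha.2⟩
  · intro i _
    simp
  · intro a ha
    simp only [biregDivisors, Finset.mem_filter, Nat.mem_divisors] at ha
    exact Nat.sub_add_cancel (Nat.pos_of_dvd_of_pos ha.1.1 (Nat.pos_of_ne_zero ha.1.2))
  · intro i _
    rfl

theorem coeff_sum_biregPartSeries (l1 l2 : ℕ) {n : ℕ} {s : Finset ℕ}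
    (hs : Finset.range n ⊆ s) :
    PowerSeries.coeff n (∑ i ∈ s, biregPartSeries l1 l2 (i + 1)) =
      (biregDivisors l1 l2 n).card := by
  have h := sum_ite_eq_sum_biregDivisors l1 l2 hs (fun _ => 1)
  simpa [biregPartSeries] using h

theorem coeff_biregPartSeries_sq (l1 l2 a n : ℕ) :
    PowerSeries.coeff n (biregPartSeries l1 l2 a ^ 2) =
      if n ≠ 0 ∧ a ∣ n ∧ ¬ l1 ∣ a ∧ ¬ l2 ∣ a then ((n / a : ℕ) : ℤ) - 1 else 0 := by
  rw [sq, PowerSeries.coeff_mul]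
  simp only [biregPartSeries, PowerSeries.coeff_mk, ite_zero_mul_ite_zero, mul_one]
  split_ifs with h
  · obtain ⟨hn, ⟨c, rfl⟩, hA⟩ := h
    have ha : 0 < a := Nat.pos_of_ne_zero (by rintro rfl; simp at hn)
    have hc : 0 < c := Nat.pos_of_ne_zero (by rintro rfl; simp at hn)
    rw [Finset.sum_boole, Nat.mul_div_cancel_left _ ha]
    have hcard : (Finset.Ioo 0 c).card =
        ((Finset.HasAntidiagonal.antidiagonal (a * c)).filter fun x : ℕ × ℕ =>
        (x.1 ≠ 0 ∧ a ∣ x.1 ∧ ¬ l1 ∣ a ∧ ¬ l2 ∣ a) ∧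
          x.2 ≠ 0 ∧ a ∣ x.2 ∧ ¬ l1 ∣ a ∧ ¬ l2 ∣ a).card := by
      refine Finset.card_bij (fun j _ => (a * j, a * (c - j))) ?_ ?_ ?_
      · intro j hj
        rw [Finset.mem_Ioo] at hj
        simp only [Finset.mem_filter, Finset.HasAntidiagonal.mem_antidiagonal, ← mul_add]
        refine ⟨by congr 1; omega, ⟨?_, dvd_mul_right _ _, hA⟩, ?_, dvd_mul_right _ _, hA⟩
        · exact (Nat.mul_pos ha hj.1).ne'
        · exact (Nat.mul_pos ha (by omega)).ne'
      · intro i _ j _ hij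
        exact Nat.eq_of_mul_eq_mul_left ha (Prod.mk.inj hij).1
      · rintro ⟨u, v⟩ huv
        simp only [Finset.mem_filter, Finset.HasAntidiagonal.mem_antidiagonal] at huv
        obtain ⟨hsum, ⟨hu, ⟨i, rfl⟩, -⟩, hv, ⟨j, rfl⟩, -⟩ := huv
        have hij : i + j = c := Nat.eq_of_mul_eq_mul_left ha (by rw [mul_add, hsum])
        have hi : i ≠ 0 := by rintro rfl; simp at hu
        have hj : j ≠ 0 := by rintro rfl; simp at hv
        refine ⟨i, Finset.mem_Ioo.2 (by omega), ?_⟩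
        rw [← hij, Nat.add_sub_cancel_left]
    rw [← hcard, Nat.card_Ioo]
    omega
  · refine Finset.sum_eq_zero fun x hx => if_neg ?_
    rintro ⟨⟨h1, h2, h3⟩, -, h4, -⟩
    have hsum := Finset.HasAntidiagonal.mem_antidiagonal.1 hx
    exact h ⟨by omega, hsum ▸ dvd_add h2 h4, h3⟩

open PowerSeries PowerSeries.WithPiTopology in
/-- The number of biregular overpartitions of `n` is the `n`-th coefficient of a finite product. -/
theorem exists_coeff_prod_eq_biregOverpartitions (l1 l2 n : ℕ) :
    ∃ s : Finset ℕ, Finset.range n ⊆ s ∧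
      coeff n (∏ i ∈ s, (1 + 2 * biregPartSeries l1 l2 (i + 1))) =
        (biregOverpartitions l1 l2 n : ℤ) := by
  let f : ℕ → ℕ → ℤ := fun i _ => if ¬ l1 ∣ i ∧ ¬ l2 ∣ i then 2 else 0
  have hprod : HasProd (fun i => 1 + 2 * biregPartSeries l1 l2 (i + 1))
      (Nat.Partition.genFun f) := by
    convert Nat.Partition.hasProd_genFun f using 1
    · rfl
    funext i
    congr 1
    symm
    ext n
    rw [(Nat.Partition.summable_genFun_term f i).map_tsum _ (continuous_coeff ℤ n),
      show (2 : ℤ⟦X⟧) = C 2 from rfl, coeff_C_mul]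
    simp only [map_smul, coeff_X_pow, biregPartSeries, coeff_mk, smul_eq_mul, f]
    by_cases hA : ¬ l1 ∣ (i + 1) ∧ ¬ l2 ∣ (i + 1)
    · simp only [if_pos hA]
      by_cases h : n ≠ 0 ∧ (i + 1) ∣ n
      · rw [if_pos ⟨h.1, h.2, hA⟩]
        obtain ⟨hn, ⟨c, rfl⟩⟩ := h
        have hc : c ≠ 0 := by rintro rfl; simp at hn
        rw [tsum_eq_single (c - 1), if_pos (by rw [Nat.sub_add_cancel (Nat.pos_of_ne_zero hc)])]
        intro j hj
        rw [if_neg, mul_zero]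
        intro h
        have := Nat.eq_of_mul_eq_mul_left (Nat.succ_pos i) h
        omega
      · rw [if_neg fun h' => h ⟨h'.1, h'.2.1⟩, mul_zero]
        refine (tsum_congr fun j => ?_).trans tsum_zero
        rw [if_neg, mul_zero]
        rintro rfl
        exact h ⟨by positivity, dvd_mul_right _ _⟩
    · simp [hA]
  rw [HasProd, tendsto_iff_coeff_tendsto] at hprod
  have hev := hprod n
  rw [nhds_discrete, Filter.tendsto_pure] at hev
  obtain ⟨s, hs, hrange⟩ := (hev.and (Filter.eventually_ge_atTop (Finset.range n))).exists
  refine ⟨s, hrange, hs.trans ?_⟩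
  rw [Nat.Partition.coeff_genFun, biregOverpartitions, Nat.cast_sum]
  refine Finset.sum_congr rfl fun q _ => ?_
  simp only [Finsupp.prod, Multiset.toFinsupp_support, f]
  split_ifs with h
  · rw [Finset.prod_congr rfl fun i hi => if_pos (h i (Multiset.mem_toFinset.1 hi))]
    simp
  · push Not at h
    obtain ⟨x, hx, hdvd⟩ := h
    rw [Nat.cast_zero]
    exact Finset.prod_eq_zero (Multiset.mem_toFinset.2 hx) (if_neg fun hA => hA.2 (hdvd hA.1))

/-- Modulo `8`, only the partitions with at most two distinct part sizes matter. -/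
theorem biregOverpartitions_modEq (l1 l2 : ℕ) {n : ℕ} (hn : n ≠ 0) :
    (biregOverpartitions l1 l2 n : ℤ) ≡ 2 * (biregDivisors l1 l2 n).card +
      2 * ∑ x ∈ Finset.HasAntidiagonal.antidiagonal n,
        ((biregDivisors l1 l2 x.1).card * (biregDivisors l1 l2 x.2).card : ℤ) -
      2 * ∑ a ∈ biregDivisors l1 l2 n, (((n / a : ℕ) : ℤ) - 1) [ZMOD 8] := by
  obtain ⟨s, hs, hcoeff⟩ := exists_coeff_prod_eq_biregOverpartitions l1 l2 n
  obtain ⟨E, C, hE, hC⟩ :=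
    exists_prod_one_add_two_mul s fun i => biregPartSeries l1 l2 (i + 1)
  have hexp : ∏ i ∈ s, (1 + 2 * biregPartSeries l1 l2 (i + 1)) =
      1 + PowerSeries.C 2 * ∑ i ∈ s, biregPartSeries l1 l2 (i + 1) +
        PowerSeries.C 2 * (∑ i ∈ s, biregPartSeries l1 l2 (i + 1)) ^ 2 -
        PowerSeries.C 2 * ∑ i ∈ s, biregPartSeries l1 l2 (i + 1) ^ 2 + PowerSeries.C 8 * C := by
    rw [hC, show (PowerSeries.C (2 : ℤ)) = 2 from rfl, show (PowerSeries.C (8 : ℤ)) = 8 from rfl]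
    linear_combination -2 * hE
  have hsq : PowerSeries.coeff n ((∑ i ∈ s, biregPartSeries l1 l2 (i + 1)) ^ 2) =
      ∑ x ∈ Finset.HasAntidiagonal.antidiagonal n,
        ((biregDivisors l1 l2 x.1).card * (biregDivisors l1 l2 x.2).card : ℤ) := by
    rw [sq, PowerSeries.coeff_mul]
    refine Finset.sum_congr rfl fun x hx => ?_
    have hx := Finset.HasAntidiagonal.mem_antidiagonal.1 hx
    rw [coeff_sum_biregPartSeries, coeff_sum_biregPartSeries]
    · exact (Finset.range_mono (by omega)).trans hs
    · exact (Finset.range_mono (by omega)).trans hs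
  have hpow : PowerSeries.coeff n (∑ i ∈ s, biregPartSeries l1 l2 (i + 1) ^ 2) =
      ∑ a ∈ biregDivisors l1 l2 n, (((n / a : ℕ) : ℤ) - 1) := by
    rw [map_sum]
    simp only [coeff_biregPartSeries_sq]
    exact sum_ite_eq_sum_biregDivisors l1 l2 hs fun a => ((n / a : ℕ) : ℤ) - 1
  rw [← hcoeff, hexp]
  simp only [map_add, map_sub, PowerSeries.coeff_C_mul, hsq, hpow,
    coeff_sum_biregPartSeries l1 l2 hs, PowerSeries.coeff_one, if_neg hn, zero_add]
  exact (Int.modEq_iff_dvd.2 ⟨-PowerSeries.coeff n C, by ring⟩)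

/-- A finite set with a fixed-point-free involution has even cardinality. -/
theorem Finset.even_card_of_involution {α : Type*} {s : Finset α} (g : α → α)
    (hmem : ∀ a ∈ s, g a ∈ s) (hne : ∀ a ∈ s, g a ≠ a) (hinv : ∀ a ∈ s, g (g a) = a) :
    Even s.card := by
  have h : ∑ _a ∈ s, (1 : ZMod 2) = 0 :=
    Finset.sum_involution (fun a _ => g a) (fun _ _ => by decide) (fun a ha _ => hne a ha)
      hmem hinv
  rw [Finset.sum_const, nsmul_one] at h
  exact (ZMod.natCast_eq_zero_iff_even).1 h

theorem even_card_divisors_of_mod_three {n : ℕ} (hn : n % 3 = 2) : Even n.divisors.card := by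
  have hn0 : n ≠ 0 := by omega
  refine Finset.even_card_of_involution (n / ·) ?_ ?_ ?_
  · intro d hd
    exact Nat.mem_divisors.2 ⟨Nat.div_dvd_of_dvd (Nat.dvd_of_mem_divisors hd), hn0⟩
  · intro d hd h
    have hmul := Nat.div_mul_cancel (Nat.dvd_of_mem_divisors hd)
    rw [h] at hmul
    rw [← hmul, Nat.mul_mod] at hn
    have : d % 3 < 3 := Nat.mod_lt _ (by norm_num)
    interval_cases d % 3 <;> simp at hn
  · intro d hd
    exact Nat.div_div_self (Nat.dvd_of_mem_divisors hd) hn0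

theorem biregDivisors_two_nine_eq_divisors {n : ℕ} (h2 : ¬ 2 ∣ n) (h3 : ¬ 3 ∣ n) :
    biregDivisors 2 9 n = n.divisors := by
  refine Finset.filter_true_of_mem fun a ha => ⟨fun h => h2 ?_, fun h => h3 ?_⟩
  · exact h.trans (Nat.dvd_of_mem_divisors ha)
  · exact (Dvd.dvd.trans (by norm_num) h).trans (Nat.dvd_of_mem_divisors ha)

theorem even_card_biregDivisors_two_nine_of_three_dvd {n : ℕ} (h3 : 3 ∣ n) :
    Even (biregDivisors 2 9 n).card := by
  refine Finset.even_card_of_involution (fun d => if 3 ∣ d then d / 3 else 3 * d) ?_ ?_ ?_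
  · intro d hd
    simp only [biregDivisors, Finset.mem_filter, Nat.mem_divisors] at hd ⊢
    obtain ⟨⟨hdn, hn⟩, hd2, hd9⟩ := hd
    split_ifs with h
    · exact ⟨⟨(Nat.div_dvd_of_dvd h).trans hdn, hn⟩, by omega, by omega⟩
    · refine ⟨⟨?_, hn⟩, by omega, by omega⟩
      exact ((Nat.Prime.coprime_iff_not_dvd Nat.prime_three).2 h).mul_dvd_of_dvd_of_dvd h3 hdn
  · intro d hd
    have hpos : 0 < d := Nat.pos_of_mem_divisors (Finset.mem_filter.1 hd).1
    split_ifs <;> omega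
  · intro d hd
    have hd9 := (Finset.mem_filter.1 hd).2.2
    split_ifs <;> omega

theorem even_card_biregDivisors_mul {u v : ℕ} (hu : ¬ 2 ∣ u) (huv : (u + v) % 3 = 1) :
    Even ((biregDivisors 2 9 u).card * (biregDivisors 2 9 v).card) := by
  rw [Nat.even_mul]
  by_cases hv3 : 3 ∣ v
  · exact Or.inr (even_card_biregDivisors_two_nine_of_three_dvd hv3)
  by_cases hu3 : 3 ∣ u
  · exact Or.inl (even_card_biregDivisors_two_nine_of_three_dvd hu3)
  left
  rw [biregDivisors_two_nine_eq_divisors hu hu3]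
  exact even_card_divisors_of_mod_three (by omega)

theorem four_dvd_sum_antidiagonal_biregDivisors {n : ℕ} (hn : n % 6 = 1) :
    4 ∣ ∑ x ∈ Finset.HasAntidiagonal.antidiagonal n,
      (biregDivisors 2 9 x.1).card * (biregDivisors 2 9 x.2).card := by
  rw [← Finset.sum_filter_add_sum_filter_not _ (fun x : ℕ × ℕ => 2 ∣ x.1)]
  have hswap : ∑ x ∈ (Finset.HasAntidiagonal.antidiagonal n).filter (fun x : ℕ × ℕ => 2 ∣ x.1),
      (biregDivisors 2 9 x.1).card * (biregDivisors 2 9 x.2).card =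
      ∑ x ∈ (Finset.HasAntidiagonal.antidiagonal n).filter (fun x : ℕ × ℕ => ¬ 2 ∣ x.1),
        (biregDivisors 2 9 x.1).card * (biregDivisors 2 9 x.2).card := by
    refine Finset.sum_nbij' Prod.swap Prod.swap ?_ ?_ (by simp) (by simp)
      (fun x _ => mul_comm _ _)
    all_goals
      rintro ⟨u, v⟩ h
      simp only [Finset.mem_filter, Finset.HasAntidiagonal.mem_antidiagonal, Prod.fst_swap,
        Prod.snd_swap] at h ⊢
      omega
  rw [hswap, ← two_mul, show 4 = 2 * 2 from rfl]
  refine Nat.mul_dvd_mul_left 2 (Finset.dvd_sum fun x hx => ?_)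
  simp only [Finset.mem_filter, Finset.HasAntidiagonal.mem_antidiagonal] at hx
  exact (even_card_biregDivisors_mul hx.2 (by omega)).two_dvd

theorem two_dvd_sum_divisors_sub_card {n : ℕ} (hn : ¬ 2 ∣ n) :
    (2 : ℤ) ∣ (∑ d ∈ n.divisors, (d : ℤ)) - n.divisors.card := by
  have h : (∑ d ∈ n.divisors, (d : ℤ)) - n.divisors.card = ∑ d ∈ n.divisors, ((d : ℤ) - 1) := by
    simp
  rw [h]
  refine Finset.dvd_sum fun d hd => ?_
  have : ¬ 2 ∣ d := fun h => hn (h.trans (Nat.dvd_of_mem_divisors hd))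
  omega

theorem biregOverpartitions_two_nine_modEq {n : ℕ} (hn : n % 6 = 1) :
    (biregOverpartitions 2 9 n : ℤ) ≡ 2 * ∑ d ∈ n.divisors, (d : ℤ) [ZMOD 8] := by
  refine (biregOverpartitions_modEq 2 9 (by omega)).trans ?_
  obtain ⟨c, hc⟩ := four_dvd_sum_antidiagonal_biregDivisors hn
  obtain ⟨e, he⟩ := two_dvd_sum_divisors_sub_card (n := n) (by omega)
  have hc' := congrArg (Nat.cast (R := ℤ)) hc
  push_cast at hc'
  have hdiv : ∑ a ∈ n.divisors, ((n / a : ℕ) : ℤ) = ∑ d ∈ n.divisors, (d : ℤ) :=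
    Nat.sum_div_divisors n fun d => (d : ℤ)
  rw [hc', biregDivisors_two_nine_eq_divisors (by omega) (by omega), Finset.sum_sub_distrib, hdiv,
    Finset.sum_const, nsmul_one]
  exact Int.modEq_iff_dvd.2 ⟨e - c, by linear_combination 4 * he⟩

/-- The recurrence for divisor sums along powers of a prime. -/
theorem sum_divisors_prime_sq_mul {p : ℕ} (hp : p.Prime) {n : ℕ} (hn : n ≠ 0) :
    ∑ d ∈ (p ^ 2 * n).divisors, d + p * ∑ d ∈ n.divisors, d =
      (p + 1) * ∑ d ∈ (p * n).divisors, d := by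
  obtain ⟨a, m, hm, rfl⟩ := Nat.exists_eq_pow_mul_and_not_dvd hn p hp.ne_one
  have key (b : ℕ) : ∑ d ∈ (p ^ b * m).divisors, d =
      (∑ j ∈ Finset.range (b + 1), p ^ j) * ∑ d ∈ m.divisors, d := by
    rw [Nat.Coprime.sum_divisors_mul (((Nat.Prime.coprime_iff_not_dvd hp).2 hm).pow_left b),
      Nat.sum_divisors_prime_pow hp]
  rw [← mul_assoc, ← mul_assoc, ← pow_add, ← pow_succ', key, key, key, add_comm 2 a,
    Finset.sum_range_succ _ (a + 2), Finset.sum_range_succ _ (a + 1)]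
  ring

theorem B29_mult_mod8 (k : ℕ) (hk : 0 < k) (p : ℕ) (hp : p.Prime) (hp5 : p % 6 = 5)
    (r : ℕ) (hr : p ∣ 6 * r + 5) (n : ℕ) :
    (biregOverpartitions 2 9 (6 * p ^ (k + 1) * n + 6 * p * r + 5 * p) : ℤ) ≡
      -(p : ℤ) * biregOverpartitions 2 9 (6 * p ^ (k - 1) * n + (6 * r + 5) / p) [ZMOD 8] := by
  obtain ⟨t, ht⟩ := hr
  obtain ⟨j, rfl⟩ := Nat.exists_eq_add_one_of_ne_zero hk.ne'
  rw [ht, Nat.mul_div_cancel_left _ hp.pos, Nat.add_sub_cancel]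
  have ht6 : t % 6 = 1 := by
    have h : (p * t) % 6 = 5 := by omega
    rw [Nat.mul_mod, hp5] at h
    omega
  obtain ⟨m, hm⟩ : ∃ m, m = 6 * p ^ j * n + t := ⟨_, rfl⟩
  have hm6 : m % 6 = 1 := by
    rw [hm, mul_assoc]
    omega
  have hpm : 6 * p ^ (j + 1 + 1) * n + 6 * p * r + 5 * p = p ^ 2 * m := by
    rw [hm]
    linear_combination p * ht
  have hpm6 : (p * m) % 6 = 5 := by rw [Nat.mul_mod, hp5, hm6]
  have hp2m6 : (p ^ 2 * m) % 6 = 1 := by rw [Nat.mul_mod, Nat.pow_mod, hp5, hm6]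
  rw [hpm, ← hm]
  refine (biregOverpartitions_two_nine_modEq hp2m6).trans
    (((biregOverpartitions_two_nine_modEq hm6).mul_left (-(p : ℤ))).trans ?_).symm
  have hrec := congrArg (Nat.cast (R := ℤ)) (sum_divisors_prime_sq_mul hp (n := m) (by omega))
  push_cast at hrec
  obtain ⟨e, he⟩ := two_dvd_sum_divisors_sub_card (n := p * m) (by omega)
  obtain ⟨c, hc⟩ := even_card_divisors_of_mod_three (n := p * m) (by omega)
  obtain ⟨q, hq⟩ : ∃ q : ℤ, (p : ℤ) + 1 = 2 * q := ⟨(p + 1) / 2, by omega⟩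
  rw [hc] at he
  push_cast at he
  refine Int.modEq_iff_dvd.2 ⟨q * (e + c), ?_⟩
  linear_combination 2 * hrec + 2 * (p + 1) * he + (4 * e + 4 * c) * hq
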